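/- arXiv:1905.07574 — 2 statements merged into one kernel-verified Lean document; each statement's English description precedes it below -/
import Mathlib

section
/- The kernel K = Ker(φ) is generated by c_{31}, c_{22}, c_{13} and the elements d_m = c_{21}^{−m} c_{12} c_{21}^{m} (m ∈ ℤ), and the obvious map from the group presented by abstract generators x_{31}, x_{22}, x_{13}, y_m (m ∈ ℤ) with relations (1) y_m^{−1} x_{31} y_m = x_{31}; (2) y_m^{−1} · x_{13}^{x_{22}^m} · y_m = x_{13}^{x_{22}^m x_{31}^{−1}}; (3) y_{m+2} = x_{22}^{−1} · x_{13}^{x_{22}^{m+1}} · y_m · (x_{13}^{x_{22}^{m}})^{−1} · x_{22}, for all m ∈ ℤ, onto K (sending x_{31} ↦ c_{31}, x_{22} ↦ c_{22}, x_{13} ↦ c_{13}, y_m ↦ d_m) is an isomorphism. -/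
/-!
Write `s = c_{21} c_{31}`, and write `p`, `q`, `r`, `y` for `c_{13}`, `c_{22}`, `c_{31}`, `c_{12}`.
In `P_4` the element `s` commutes with `q` and `r`, conjugation by `s` acts on `p` as conjugation
by `q` (indeed `A_{34} = q s⁻¹` commutes with `p`), and `d_m = s^{-m} y s^m`. Hence the relations
(1)–(3) for general `m` are the conjugates by `s^m` of those for `m = 0`, and it suffices to
consider the group `Γ` generated by `p, q, r, y, s` subject to six relations (`IsKer`). The
underlying fact is that `P_4` is the direct product of `Γ` and the infinite cyclic group generated by
the full twist. The two computations behind it are `IsPure.isKer` (the six relations follow from the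
pure braid relations) and `IsKer.isPure` (words in `p, q, r, y, s` satisfy the pure braid relations,
the image of the full twist being trivial).

By `IsPure.isKer` the map `toP4` from the presented group `KP` to `P_4` is well defined. The shift
`y_m ↦ y_{m+1}`, `x_{13} ↦ x_{13}^{x_{22}}` defines an action of `ℤ` on `KP`, and the semidirect
product is `Γ`; so `IsKer.isPure` yields a homomorphism `fromP4` from `P_4` to this semidirect
product. Composed with `toP4` it is the inclusion of `KP`, whence `toP4` is injective.

The image of `toP4` is the subgroup `gens` generated by `c_{31}`, `c_{22}`, `c_{13}` and the `d_m`.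
It is normal (`gens_normal`), and `P_4` is generated by it together with the commuting elements
`c_{11}`, `c_{21}`, which `φ` sends to a basis of `ℤ²`; so it equals the kernel of `φ`
(`gens_eq_ker`).
-/

namespace Paper

/-- Generators `A_{i,j}`, `1 ≤ i < j ≤ 4`, of the pure braid group `P_4`. -/
abbrev PGen := {p : ℕ × ℕ // 1 ≤ p.1 ∧ p.1 < p.2 ∧ p.2 ≤ 4}

/-- The generator `A_{i,j}` as an element of the free group (junk value `1` out of range). -/
def fA (i j : ℕ) : FreeGroup PGen :=
  if h : 1 ≤ i ∧ i < j ∧ j ≤ 4 then FreeGroup.of ⟨(i, j), h⟩ else 1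

/-- Conjugation `a^b = b⁻¹ * a * b`. -/
def cj {G : Type*} [Group G] (a b : G) : G := b⁻¹ * a * b

/-- Commutator `[a, b] = a⁻¹ * b⁻¹ * a * b`. -/
def cm {G : Type*} [Group G] (a b : G) : G := a⁻¹ * b⁻¹ * a * b

/-- The defining relations of the pure braid group `P_4` (`ε = ±1`):
`A_{i,k}^{-ε}A_{k,j}A_{i,k}^{ε} = (A_{i,j}A_{k,j})^{ε}A_{k,j}(A_{i,j}A_{k,j})^{-ε}` for `i<k<j`;
`A_{k,m}^{-ε}A_{k,j}A_{k,m}^{ε} = (A_{k,j}A_{m,j})^{ε}A_{k,j}(A_{k,j}A_{m,j})^{-ε}` for `k<m<j`;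
`A_{i,m}^{-ε}A_{k,j}A_{i,m}^{ε} = [A_{i,j}^{-ε},A_{m,j}^{-ε}]^{ε}A_{k,j}[A_{i,j}^{-ε},A_{m,j}^{-ε}]^{-ε}`
for `i<k<m<j`; and `A_{i,m}^{-ε}A_{k,j}A_{i,m}^{ε} = A_{k,j}` for `k<i, m<j`, or `m<k`. -/
def P4Rels : Set (FreeGroup PGen) :=
  {r | ∃ e : ℤ, (e = 1 ∨ e = -1) ∧
    ((∃ i k j : ℕ, 1 ≤ i ∧ i < k ∧ k < j ∧ j ≤ 4 ∧
        r = (fA i k) ^ (-e) * fA k j * (fA i k) ^ e *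
            ((fA i j * fA k j) ^ e * fA k j * (fA i j * fA k j) ^ (-e))⁻¹) ∨
     (∃ k m j : ℕ, 1 ≤ k ∧ k < m ∧ m < j ∧ j ≤ 4 ∧
        r = (fA k m) ^ (-e) * fA k j * (fA k m) ^ e *
            ((fA k j * fA m j) ^ e * fA k j * (fA k j * fA m j) ^ (-e))⁻¹) ∨
     (∃ i k m j : ℕ, 1 ≤ i ∧ i < k ∧ k < m ∧ m < j ∧ j ≤ 4 ∧
        r = (fA i m) ^ (-e) * fA k j * (fA i m) ^ e *
            ((cm ((fA i j) ^ (-e)) ((fA m j) ^ (-e))) ^ e * fA k j *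
             (cm ((fA i j) ^ (-e)) ((fA m j) ^ (-e))) ^ (-e))⁻¹) ∨
     (∃ i m k j : ℕ, 1 ≤ i ∧ i < m ∧ m ≤ 4 ∧ 1 ≤ k ∧ k < j ∧ j ≤ 4 ∧
        ((k < i ∧ m < j) ∨ m < k) ∧
        r = (fA i m) ^ (-e) * fA k j * (fA i m) ^ e * (fA k j)⁻¹))}

/-- The pure braid group `P_4`, given by its presentation. -/
abbrev P4 := PresentedGroup P4Rels

/-- The generator `A_{i,j}` as an element of `P_4` (junk value `1` out of range). -/
def pA (i j : ℕ) : P4 :=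
  if h : 1 ≤ i ∧ i < j ∧ j ≤ 4 then PresentedGroup.of ⟨(i, j), h⟩ else 1

/-- `c_{11} = A_{12}⁻¹`. -/
def c11 : P4 := (pA 1 2)⁻¹
/-- `c_{21} = A_{23}⁻¹A_{13}⁻¹`. -/
def c21 : P4 := (pA 2 3)⁻¹ * (pA 1 3)⁻¹
/-- `c_{12} = A_{13}⁻¹A_{12}⁻¹`. -/
def c12 : P4 := (pA 1 3)⁻¹ * (pA 1 2)⁻¹
/-- `c_{31} = A_{34}⁻¹A_{24}⁻¹A_{14}⁻¹`. -/
def c31 : P4 := (pA 3 4)⁻¹ * (pA 2 4)⁻¹ * (pA 1 4)⁻¹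
/-- `c_{22} = A_{24}⁻¹A_{14}⁻¹A_{23}⁻¹A_{13}⁻¹`. -/
def c22 : P4 := (pA 2 4)⁻¹ * (pA 1 4)⁻¹ * (pA 2 3)⁻¹ * (pA 1 3)⁻¹
/-- `c_{13} = A_{14}⁻¹A_{13}⁻¹A_{12}⁻¹`. -/
def c13 : P4 := (pA 1 4)⁻¹ * (pA 1 3)⁻¹ * (pA 1 2)⁻¹


/-- `d_m = c_{21}^{-m} c_{12} c_{21}^{m}` in `P_4`, `m ∈ ℤ`. -/
def d (m : ℤ) : P4 := c21 ^ (-m) * c12 * c21 ^ m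

/-- Abstract generators `x_{31}, x_{22}, x_{13}` and `y_m` (`m ∈ ℤ`) for
the presentation of `Ker(φ)` in Lemma 4.2. -/
inductive KGen
  | x31 | x22 | x13 | y (m : ℤ)

namespace KGen
open FreeGroup
/-- The defining relations (1), (2), (3) of Lemma 4.2, for all `m ∈ ℤ`:
(1) `y_m⁻¹ x_{31} y_m = x_{31}`;
(2) `y_m⁻¹ x_{13}^{x_{22}^m} y_m = x_{13}^{x_{22}^m x_{31}⁻¹}`;
(3) `y_{m+2} = x_{22}⁻¹ x_{13}^{x_{22}^{m+1}} y_m (x_{13}^{x_{22}^m})⁻¹ x_{22}`. -/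
def rels : Set (FreeGroup KGen) :=
  {r | ∃ m : ℤ,
    r = (of (y m))⁻¹ * of x31 * of (y m) * (of x31)⁻¹ ∨
    r = (of (y m))⁻¹ * cj (of x13) (of x22 ^ m) * of (y m) *
        (cj (of x13) (of x22 ^ m * (of x31)⁻¹))⁻¹ ∨
    r = of (y (m + 2)) *
        ((of x22)⁻¹ * cj (of x13) (of x22 ^ (m + 1)) * of (y m) *
         (cj (of x13) (of x22 ^ m))⁻¹ * of x22)⁻¹}
end KGen

/-! ### Pure braid relations as commutation relations -/

/-- Six elements of a group satisfying the relations of `P_4`, written as commutation relations.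
Here `u`, `v`, `w`, `a`, `b`, `c` stand for `A_{12}`, `A_{13}`, `A_{23}`, `A_{14}`, `A_{24}`,
`A_{34}`. -/
structure IsPure {G : Type*} [Group G] (u v w a b c : G) : Prop where
  u_vw : Commute u (v * w)
  uvw_v : Commute (u * (v * w)) v
  u_ab : Commute u (a * b)
  uab_a : Commute (u * (a * b)) a
  v_ac : Commute v (a * c)
  vac_a : Commute (v * (a * c)) a
  w_bc : Commute w (b * c)
  wbc_b : Commute (w * (b * c)) b
  u_c : Commute u c
  w_a : Commute w a
  v_abc : Commute v (a * b * c)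

section Group
variable {G : Type*} [Group G]

/-- The two relations of a triple of strands, in their `ε = 1` form, amount to the commutation
of `u` with `a * b` and of `u * (a * b)` with `a`. -/
lemma commute_of_conj {u a b : G} (ha : u⁻¹ * a * u = a * b * a * (a * b)⁻¹)
    (hb : u⁻¹ * b * u = a * b * b * (a * b)⁻¹) :
    Commute u (a * b) ∧ Commute (u * (a * b)) a := by
  have ha' : a * u = u * (a * b * a * (a * b)⁻¹) := by rw [← ha]; group
  have hb' : b * u = u * (a * b * b * (a * b)⁻¹) := by rw [← hb]; group
  have h : Commute u (a * b) := by
    show u * (a * b) = a * b * u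
    rw [mul_assoc a, hb', ← mul_assoc a, ha']
    group
  refine ⟨h, ?_⟩
  show u * (a * b) * a = a * (u * (a * b))
  rw [← mul_assoc a, ha']
  group

/-- An element commuting with a product and with its first factor commutes with its second. -/
lemma commute_right {x a b : G} (h : Commute x (a * b)) (ha : Commute x a) : Commute x b := by
  simpa using ha.inv_right.mul_right h

lemma commute_left {x a b : G} (h : Commute x (a * b)) (hb : Commute x b) : Commute x a := by
  simpa using h.mul_right hb.inv_right

/-- If `u` commutes with `m` and `u * m` commutes with `x`, then conjugation of `x` by `u ^ ε`
is conjugation by `m ^ (-ε)`. -/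
lemma conj_of_commute {u m x : G} (hm : Commute u m) (hx : Commute (u * m) x) (e : ℤ) :
    u ^ (-e) * x * u ^ e = m ^ e * x * m ^ (-e) := by
  have h := (hx.zpow_left e).eq
  rw [hm.mul_zpow] at h
  have h' : x * u ^ e = u ^ e * m ^ e * x * m ^ (-e) := by rw [h]; group
  rw [mul_assoc, h']
  group

end Group

/-- The assignment of six elements to the generators `A_{12}`, `A_{13}`, `A_{23}`, `A_{14}`,
`A_{24}`, `A_{34}`. -/
def pgen {G : Type*} [Group G] (u v w a b c : G) : PGen → G := fun p =>
  match p.1 with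
  | (1, 2) => u
  | (1, 3) => v
  | (2, 3) => w
  | (1, 4) => a
  | (2, 4) => b
  | (3, 4) => c
  | _ => 1

/-- Elements satisfying the commutation form of the pure braid relations define a homomorphism
out of `P_4`. -/
lemma lift_P4Rels {G : Type*} [Group G] {u v w a b c : G} (h : IsPure u v w a b c) :
    ∀ r ∈ P4Rels, FreeGroup.lift (pgen u v w a b c) r = 1 := by
  have e12 : FreeGroup.lift (pgen u v w a b c) (fA 1 2) = u := by simp [fA, pgen]
  have e13 : FreeGroup.lift (pgen u v w a b c) (fA 1 3) = v := by simp [fA, pgen]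
  have e23 : FreeGroup.lift (pgen u v w a b c) (fA 2 3) = w := by simp [fA, pgen]
  have e14 : FreeGroup.lift (pgen u v w a b c) (fA 1 4) = a := by simp [fA, pgen]
  have e24 : FreeGroup.lift (pgen u v w a b c) (fA 2 4) = b := by simp [fA, pgen]
  have e34 : FreeGroup.lift (pgen u v w a b c) (fA 3 4) = c := by simp [fA, pgen]
  have uvw_w : Commute (u * (v * w)) w :=
    commute_right (h.u_vw.mul_left (Commute.refl _)) h.uvw_v
  have uab_b : Commute (u * (a * b)) b :=
    commute_right (h.u_ab.mul_left (Commute.refl _)) h.uab_a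
  have vac_c : Commute (v * (a * c)) c :=
    commute_right (h.v_ac.mul_left (Commute.refl _)) h.vac_a
  have wbc_c : Commute (w * (b * c)) c :=
    commute_right (h.w_bc.mul_left (Commute.refl _)) h.wbc_b
  rintro r ⟨e, he, h1 | h1 | h1 | h1⟩
  · obtain ⟨i, k, j, hi, hik, hkj, hj, rfl⟩ := h1
    rw [map_mul, map_inv, mul_inv_eq_one]
    simp only [map_mul, map_zpow]
    have : j ≤ 4 := hj
    have : k ≤ 3 := by omega
    have : i ≤ 2 := by omega
    interval_cases i <;> interval_cases k <;> interval_cases j <;>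
      simp only [e12, e13, e23, e14, e24, e34]
    · exact conj_of_commute h.u_vw uvw_w e
    · exact conj_of_commute h.u_ab uab_b e
    · exact conj_of_commute h.v_ac vac_c e
    · exact conj_of_commute h.w_bc wbc_c e
  · obtain ⟨i, k, j, hi, hik, hkj, hj, rfl⟩ := h1
    rw [map_mul, map_inv, mul_inv_eq_one]
    simp only [map_mul, map_zpow]
    have : k ≤ 3 := by omega
    have : i ≤ 2 := by omega
    interval_cases i <;> interval_cases k <;> interval_cases j <;>
      simp only [e12, e13, e23, e14, e24, e34]
    · exact conj_of_commute h.u_vw h.uvw_v e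
    · exact conj_of_commute h.u_ab h.uab_a e
    · exact conj_of_commute h.v_ac h.vac_a e
    · exact conj_of_commute h.w_bc h.wbc_b e
  · obtain ⟨i, k, m, j, hi, hik, hkm, hmj, hj, rfl⟩ := h1
    obtain ⟨rfl, rfl, rfl, rfl⟩ : i = 1 ∧ k = 2 ∧ m = 3 ∧ j = 4 := by omega
    rw [map_mul, map_inv, mul_inv_eq_one]
    simp only [cm, map_mul, map_zpow, map_inv, e13, e14, e24, e34]
    have ha := conj_of_commute h.v_ac h.vac_a e
    have hc := conj_of_commute h.v_ac vac_c e
    have habc : v ^ (-e) * (a * b * c) * v ^ e = a * b * c := by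
      rw [mul_assoc, ((h.v_abc.symm).zpow_right e).eq]; group
    -- The action on `b` is read off from the actions on `a`, `c` and `a * b * c`.
    have hb : v ^ (-e) * b * v ^ e =
        (v ^ (-e) * a * v ^ e)⁻¹ * (v ^ (-e) * (a * b * c) * v ^ e) *
          (v ^ (-e) * c * v ^ e)⁻¹ := by group
    rw [hb, ha, hc, habc]
    rcases he with rfl | rfl <;> group
  · obtain ⟨i, m, k, j, hi, him, hm, hk, hkj, hj, hh, rfl⟩ := h1
    rw [map_mul, map_inv, mul_inv_eq_one]
    simp only [map_mul, map_zpow]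
    obtain ⟨rfl, rfl, rfl, rfl⟩ | ⟨rfl, rfl, rfl, rfl⟩ :
        (i = 2 ∧ m = 3 ∧ k = 1 ∧ j = 4) ∨ (i = 1 ∧ m = 2 ∧ k = 3 ∧ j = 4) := by omega
    · rw [e23, e14, mul_assoc, (h.w_a.symm.zpow_right e).eq]; group
    · rw [e12, e34, mul_assoc, (h.u_c.symm.zpow_right e).eq]; group

lemma mk_fA (i j : ℕ) : PresentedGroup.mk P4Rels (fA i j) = pA i j := by
  unfold fA pA
  split_ifs
  · rfl
  · exact map_one _

lemma P4_rel {r : FreeGroup PGen} (h : r ∈ P4Rels) : PresentedGroup.mk P4Rels r = 1 :=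
  PresentedGroup.one_of_mem h

lemma P4_triple {i k j : ℕ} (hi : 1 ≤ i) (hik : i < k) (hkj : k < j) (hj : j ≤ 4) :
    Commute (pA i k) (pA i j * pA k j) ∧ Commute (pA i k * (pA i j * pA k j)) (pA i j) := by
  have h1 := P4_rel ⟨1, Or.inl rfl, Or.inl ⟨i, k, j, hi, hik, hkj, hj, rfl⟩⟩
  have h2 := P4_rel ⟨1, Or.inl rfl, Or.inr (Or.inl ⟨i, k, j, hi, hik, hkj, hj, rfl⟩)⟩
  rw [map_mul, map_inv, mul_inv_eq_one] at h1 h2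
  simp only [map_mul, map_inv, mk_fA, zpow_neg, zpow_one] at h1 h2
  exact commute_of_conj h2 h1

lemma P4_comm {i m k j : ℕ} (hi : 1 ≤ i) (him : i < m) (hm : m ≤ 4) (hk : 1 ≤ k) (hkj : k < j)
    (hj : j ≤ 4) (h : (k < i ∧ m < j) ∨ m < k) : Commute (pA i m) (pA k j) := by
  have h1 := P4_rel ⟨1, Or.inl rfl,
    Or.inr (Or.inr (Or.inr ⟨i, m, k, j, hi, him, hm, hk, hkj, hj, h, rfl⟩))⟩
  rw [map_mul, map_inv, mul_inv_eq_one] at h1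
  simp only [map_mul, map_inv, mk_fA, zpow_neg, zpow_one] at h1
  show _ = _
  conv_lhs => rw [← h1]
  group

/-- The generators of `P_4` satisfy the commutation form of the relations. -/
lemma isPure_pA : IsPure (pA 1 2) (pA 1 3) (pA 2 3) (pA 1 4) (pA 2 4) (pA 3 4) := by
  have t123 := P4_triple (i := 1) (k := 2) (j := 3) (by omega) (by omega) (by omega) (by omega)
  have t124 := P4_triple (i := 1) (k := 2) (j := 4) (by omega) (by omega) (by omega) (by omega)
  have t134 := P4_triple (i := 1) (k := 3) (j := 4) (by omega) (by omega) (by omega) (by omega)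
  have t234 := P4_triple (i := 2) (k := 3) (j := 4) (by omega) (by omega) (by omega) (by omega)
  refine ⟨t123.1, t123.2, t124.1, t124.2, t134.1, t134.2, t234.1, t234.2,
    P4_comm (by omega) (by omega) (by omega) (by omega) (by omega) (by omega) (by omega),
    P4_comm (by omega) (by omega) (by omega) (by omega) (by omega) (by omega) (by omega), ?_⟩
  have hb := P4_rel ⟨1, Or.inl rfl, Or.inr (Or.inr (Or.inl
    ⟨1, 2, 3, 4, by omega, by omega, by omega, by omega, by omega, rfl⟩))⟩
  rw [map_mul, map_inv, mul_inv_eq_one] at hb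
  simp only [cm, map_mul, map_inv, mk_fA, zpow_neg, zpow_one, inv_inv] at hb
  have ha := conj_of_commute t134.1 t134.2 1
  have hc := conj_of_commute t134.1
    (commute_right (t134.1.mul_left (Commute.refl _)) t134.2) 1
  simp only [zpow_neg, zpow_one] at ha hc
  generalize pA 1 3 = v at *
  generalize pA 1 4 = a at *
  generalize pA 2 4 = b at *
  generalize pA 3 4 = c at *
  have : v⁻¹ * (a * b * c) * v = a * b * c := by
    calc v⁻¹ * (a * b * c) * v = (v⁻¹ * a * v) * (v⁻¹ * b * v) * (v⁻¹ * c * v) := by group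
      _ = a * b * c := by rw [ha, hb, hc]; group
  show _ = _
  conv_lhs => rw [← this]
  group

/-! ### The second presentation -/

/-- Elements `p`, `q`, `r`, `y`, `s` standing for `x_{13}`, `x_{22}`, `x_{31}`, `y_0` and an element
`s` whose conjugation action `x ↦ s⁻¹ x s` shifts `y_m` to `y_{m+1}`, with the relations expressing
the action of `s` on `p`, `q`, `r` and the relations `(1)`, `(2)`, `(3)` for `m = 0`. The relations for other `m` follow by conjugation by `s ^ m`. -/
structure IsKer {G : Type*} [Group G] (p q r y s : G) : Prop where
  s_q : Commute s q
  s_r : Commute s r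
  p_s : s⁻¹ * p * s = q⁻¹ * p * q
  y_r : Commute y r
  yr_p : Commute (y * r) p
  y_two : (s * s)⁻¹ * y * (s * s) = q⁻¹ * (q⁻¹ * p * q) * y * p⁻¹ * q

section Group
variable {G : Type*} [Group G]

namespace IsKer
variable {p q r y s : G} (h : IsKer p q r y s)
include h

lemma p_mul_s : p * s = s * q⁻¹ * p * q := by
  have := h.p_s
  calc p * s = s * (s⁻¹ * p * s) := by group
    _ = _ := by rw [this]; group

lemma qs_p : Commute (q * s⁻¹) p := by
  show q * s⁻¹ * p = p * (q * s⁻¹)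
  have h1 := h.p_mul_s
  calc q * s⁻¹ * p = q * s⁻¹ * (p * s) * s⁻¹ := by group
    _ = p * (q * s⁻¹) := by rw [h1]; group

lemma p_ss : (s * s)⁻¹ * p * (s * s) = q⁻¹ * (q⁻¹ * p * q) * q := by
  calc (s * s)⁻¹ * p * (s * s) = s⁻¹ * (s⁻¹ * p * s) * s := by group
    _ = (q * s)⁻¹ * p * (q * s) := by rw [h.p_s]; group
    _ = (s * q)⁻¹ * p * (s * q) := by rw [h.s_q.eq]
    _ = q⁻¹ * (s⁻¹ * p * s) * q := by group
    _ = _ := by rw [h.p_s]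

/-- The relation `A_{12}⁻¹ A_{14} A_{12} = (A_{14} A_{24}) A_{14} (A_{14} A_{24})⁻¹`, the
least direct of the pure braid relations: it uses relations `(1)` and `(2)` for `m = 2`, with `y_2`
eliminated by `(3)`. -/
lemma ss_a : Commute (s * s * r⁻¹ * q⁻¹) (y * p⁻¹) := by
  have hr : (s * s)⁻¹ * r * (s * s) = r := by
    rw [mul_assoc, ((h.s_r.mul_left h.s_r).eq).symm]; group
  have h1 : Commute ((s * s)⁻¹ * y * (s * s)) r := by
    have := (Commute.conj_iff (s * s)⁻¹).2 h.y_r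
    rwa [inv_inv, hr] at this
  have h2 : Commute (((s * s)⁻¹ * y * (s * s)) * r) ((s * s)⁻¹ * p * (s * s)) := by
    have := (Commute.conj_iff (s * s)⁻¹).2 h.yr_p
    rw [inv_inv] at this
    rwa [show (s * s)⁻¹ * (y * r) * (s * s) =
      ((s * s)⁻¹ * y * (s * s)) * ((s * s)⁻¹ * r * (s * s)) by group, hr] at this
  have ha : (s * s)⁻¹ * (y * p⁻¹) * (s * s) =
      ((s * s)⁻¹ * y * (s * s)) * ((s * s)⁻¹ * p * (s * s))⁻¹ := by simp [mul_assoc]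
  rw [h.p_ss, h.y_two] at h2 ha
  rw [h.y_two] at h1
  generalize hP : q⁻¹ * p * q = P at *
  generalize hA : y * p⁻¹ = a at *
  have hA' : y = a * p := by rw [← hA]; group
  subst hA'
  have k1 : Commute (P * a) (q * r * q⁻¹) := by
    have := (Commute.conj_iff q).2 h1
    rwa [show q * (q⁻¹ * P * (a * p) * p⁻¹ * q) * q⁻¹ = P * a by group] at this
  have k2 : Commute (P * a * (q * r * q⁻¹)) P := by
    have := (Commute.conj_iff q).2 h2
    rwa [show q * (q⁻¹ * P * (a * p) * p⁻¹ * q * r) * q⁻¹ = P * a * (q * r * q⁻¹) by group,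
      show q * (q⁻¹ * P * q) * q⁻¹ = P by group] at this
  have k3 : a * (q * r * q⁻¹) * P = (q * r * q⁻¹) * P * a := by
    have e1 := k1.eq
    have e2 := k2.eq
    calc a * (q * r * q⁻¹) * P = P⁻¹ * (P * a * (q * r * q⁻¹) * P) := by group
      _ = P * a * (q * r * q⁻¹) := by rw [e2]; group
      _ = _ := by rw [e1]; group
  have k4 : (s * s)⁻¹ * a * (s * s) = (q * r)⁻¹ * a * (q * r) := by
    rw [ha]
    calc q⁻¹ * P * (a * p) * p⁻¹ * q * (q⁻¹ * P * q)⁻¹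
        = q⁻¹ * (q * r * q⁻¹)⁻¹ * ((q * r * q⁻¹) * P * a) * P⁻¹ * q := by group
      _ = _ := by rw [← k3]; group
  show _ = _
  calc s * s * r⁻¹ * q⁻¹ * a = s * s * ((q * r)⁻¹ * a * (q * r)) * (q * r)⁻¹ := by group
    _ = _ := by rw [← k4]; group

/-- The pure braid relations hold for suitable words in `p`, `q`, `r`, `y`, `s`. -/
lemma isPure : IsPure s (s⁻¹ * y⁻¹) (y * r) (y * p⁻¹) (p * y⁻¹ * s * r⁻¹ * q⁻¹) (q * s⁻¹) := by
  have hab : y * p⁻¹ * (p * y⁻¹ * s * r⁻¹ * q⁻¹) = s * r⁻¹ * q⁻¹ := by group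
  have hsr' : s * r⁻¹ = r⁻¹ * s := h.s_r.inv_right.eq
  have hbc : p * y⁻¹ * s * r⁻¹ * q⁻¹ * (q * s⁻¹) = p * (y * r)⁻¹ := by
    rw [h.y_r.eq, mul_assoc (p * y⁻¹), hsr']; group
  have habc : y * p⁻¹ * (p * y⁻¹ * s * r⁻¹ * q⁻¹) * (q * s⁻¹) = r⁻¹ := by
    rw [hab, hsr']; group
  have hvw : s⁻¹ * y⁻¹ * (y * r) = s⁻¹ * r := by group
  have p_c := h.qs_p.symm
  have v_ac : Commute (s⁻¹ * y⁻¹) (y * p⁻¹ * (q * s⁻¹)) := by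
    rw [← mul_inv_rev]
    apply Commute.inv_left
    have e := h.y_two
    have e' : y * s * s = s * s * q⁻¹ * q⁻¹ * p * q * y * p⁻¹ * q := by
      calc y * s * s = s * s * ((s * s)⁻¹ * y * (s * s)) := by group
        _ = _ := by rw [e]; group
    have e1 : q * s * q⁻¹ * q⁻¹ * p * q = p * s := by
      rw [h.p_mul_s, ← h.s_q.eq]; group
    show _ = _
    symm
    calc y * p⁻¹ * (q * s⁻¹) * (y * s) = y * p⁻¹ * q * s⁻¹ * (y * s * s) * s⁻¹ := by group
      _ = y * p⁻¹ * (q * s * q⁻¹ * q⁻¹ * p * q) * y * p⁻¹ * q * s⁻¹ := by rw [e']; group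
      _ = _ := by rw [e1]; group
  refine ⟨?_, ?_, ?_, ?_, v_ac, ?_, ?_, ?_, ?_, ?_, ?_⟩
  · rw [hvw]; exact (Commute.refl s).inv_right.mul_right h.s_r
  · rw [hvw, mul_inv_cancel_left]
    exact (h.s_r.inv_left.mul_left h.y_r.inv_left).symm
  · rw [hab]
    exact ((Commute.refl s).mul_right h.s_r.inv_right).mul_right h.s_q.inv_right
  · rw [hab, ← mul_assoc, ← mul_assoc]; exact h.ss_a
  · set X := s⁻¹ * y⁻¹ * (y * p⁻¹ * (q * s⁻¹)) with hX
    have hc : Commute X (q * s⁻¹) := by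
      have : X = s⁻¹ * p⁻¹ * (q * s⁻¹) := by rw [hX]; group
      rw [this]
      exact (((h.s_q.mul_right (Commute.refl s).inv_right).inv_left).mul_left
        p_c.inv_left).mul_left (Commute.refl _)
    have hv : Commute X (s⁻¹ * y⁻¹) := ((Commute.refl _).mul_right v_ac).symm
    exact commute_left (commute_right (Commute.refl X) hv) hc
  · rw [hbc]; exact h.yr_p.mul_right (Commute.refl _).inv_right
  · have : y * r * (p * y⁻¹ * s * r⁻¹ * q⁻¹ * (q * s⁻¹)) = p := by
      rw [hbc, ← mul_assoc, h.yr_p.eq]; group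
    rw [this]
    refine commute_left ?_ p_c
    rw [hbc]
    exact (Commute.refl p).mul_right h.yr_p.symm.inv_right
  · exact h.s_q.mul_right (Commute.refl s).inv_right
  · exact ((Commute.refl y).mul_left h.y_r.symm).mul_right h.yr_p.inv_right
  · rw [habc]; exact (h.s_r.inv_left.mul_left h.y_r.inv_left).inv_right

end IsKer

namespace IsPure
variable {u v w a b c : G} (h : IsPure u v w a b c)
include h

lemma abc_comm : Commute u (a * b * c) ∧ Commute v (a * b * c) ∧ Commute w (a * b * c) :=
  ⟨h.u_ab.mul_right h.u_c, h.v_abc, by rw [mul_assoc]; exact h.w_a.mul_right h.w_bc⟩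

lemma uvw_comm : Commute (u * (v * w)) u ∧ Commute (u * (v * w)) v ∧ Commute (u * (v * w)) w :=
  have hu := ((Commute.refl u).mul_right h.u_vw).symm
  ⟨hu, h.uvw_v, commute_right (commute_right (Commute.refl _) hu) h.uvw_v⟩

/-- The full twist is central. -/
lemma central : Commute (u * (v * w) * (a * b * c)) u ∧ Commute (u * (v * w) * (a * b * c)) v ∧
    Commute (u * (v * w) * (a * b * c)) w ∧ Commute (u * (v * w) * (a * b * c)) a ∧
    Commute (u * (v * w) * (a * b * c)) b ∧ Commute (u * (v * w) * (a * b * c)) c := by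
  obtain ⟨mu, mv, mw⟩ := h.abc_comm
  obtain ⟨du, dv, dw⟩ := h.uvw_comm
  have hM : Commute (u * (v * w) * (a * b * c)) (a * b * c) :=
    (mu.mul_left (mv.mul_left mw)).mul_left (Commute.refl _)
  have vac_c : Commute (v * (a * c)) c :=
    commute_right (h.v_ac.mul_left (Commute.refl _)) h.vac_a
  have wbc_c : Commute (w * (b * c)) c :=
    commute_right (h.w_bc.mul_left (Commute.refl _)) h.wbc_b
  have au := conj_of_commute h.u_ab h.uab_a 1
  have av := conj_of_commute h.v_ac h.vac_a 1
  have cv := conj_of_commute h.v_ac vac_c 1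
  have cw := conj_of_commute h.w_bc wbc_c 1
  simp only [zpow_neg, zpow_one] at au av cv cw
  have cu : u⁻¹ * c * u = c := by rw [mul_assoc, ← h.u_c.eq]; group
  have aw : w⁻¹ * a * w = a := by rw [mul_assoc, ← h.w_a.eq]; group
  have Mv : v⁻¹ * (a * b * c) * v = a * b * c := by rw [mul_assoc, ← mv.eq]; group
  have hc : Commute (u * (v * w) * (a * b * c)) c := by
    have e : (u * (v * w))⁻¹ * c * (u * (v * w)) = (a * b * c) * c * (a * b * c)⁻¹ := by
      calc (u * (v * w))⁻¹ * c * (u * (v * w))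
          = w⁻¹ * (v⁻¹ * (u⁻¹ * c * u) * v) * w := by group
        _ = (w⁻¹ * a * w) * (w⁻¹ * c * w) * (w⁻¹ * a * w)⁻¹ := by rw [cu, cv]; group
        _ = _ := by rw [aw, cw]; group
    show _ = _
    calc u * (v * w) * (a * b * c) * c
        = u * (v * w) * ((a * b * c) * c * (a * b * c)⁻¹) * (a * b * c) := by group
      _ = _ := by rw [← e]; group
  have ha : Commute (u * (v * w) * (a * b * c)) a := by
    have e : (u * v)⁻¹ * a * (u * v) = (a * b * c) * a * (a * b * c)⁻¹ := by
      calc (u * v)⁻¹ * a * (u * v)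
          = v⁻¹ * (u⁻¹ * a * u) * v := by group
        _ = (v⁻¹ * (a * b * c) * v) * (v⁻¹ * c * v)⁻¹ * (v⁻¹ * a * v) * (v⁻¹ * c * v) *
            (v⁻¹ * (a * b * c) * v)⁻¹ := by rw [au]; group
        _ = _ := by rw [Mv, cv, av]; group
    have e2 : Commute (u * v * (a * b * c)) a := by
      show _ = _
      calc u * v * (a * b * c) * a
          = u * v * ((a * b * c) * a * (a * b * c)⁻¹) * (a * b * c) := by group
        _ = _ := by rw [← e]; group
    have e3 : u * (v * w) * (a * b * c) = u * v * (a * b * c) * w := by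
      rw [mul_assoc (u * v), ← mw.eq]; group
    rw [e3]
    exact e2.mul_left h.w_a
  refine ⟨du.mul_left mu.symm, dv.mul_left mv.symm, dw.mul_left mw.symm, ha, ?_, hc⟩
  exact commute_right (commute_left hM hc) ha

/-- The relations of the second presentation hold in the pure braid group, with
`s = c_{21} c_{31}`. -/
lemma isKer : IsKer (a⁻¹ * v⁻¹ * u⁻¹) (b⁻¹ * a⁻¹ * w⁻¹ * v⁻¹) (c⁻¹ * b⁻¹ * a⁻¹) (v⁻¹ * u⁻¹)
    (w⁻¹ * v⁻¹ * (c⁻¹ * b⁻¹ * a⁻¹)) := by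
  obtain ⟨mu, mv, mw⟩ := h.abc_comm
  obtain ⟨du, dv, dw⟩ := h.uvw_comm
  obtain ⟨zu, zv, zw, za, zb, zc⟩ := h.central
  have hr : c⁻¹ * b⁻¹ * a⁻¹ = (a * b * c)⁻¹ := by group
  -- `s`, `A_{12}` and the full twist are related by `A_{12} = z s`.
  have hu : u * (v * w) * (a * b * c) * (w⁻¹ * v⁻¹ * (c⁻¹ * b⁻¹ * a⁻¹)) = u := by
    have : Commute (w⁻¹ * v⁻¹) (c⁻¹ * b⁻¹ * a⁻¹) := by
      rw [hr]; exact (mw.inv_left.mul_left mv.inv_left).inv_right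
    rw [this.eq]; group
  have hq : b⁻¹ * a⁻¹ * w⁻¹ * v⁻¹ = c * (w⁻¹ * v⁻¹ * (c⁻¹ * b⁻¹ * a⁻¹)) := by
    have : Commute (w⁻¹ * v⁻¹) (c⁻¹ * b⁻¹ * a⁻¹) := by
      rw [hr]; exact (mw.inv_left.mul_left mv.inv_left).inv_right
    rw [this.eq]; group
  have hsr : Commute (w⁻¹ * v⁻¹ * (c⁻¹ * b⁻¹ * a⁻¹)) (c⁻¹ * b⁻¹ * a⁻¹) := by
    refine Commute.mul_left ?_ (Commute.refl _)
    rw [hr]; exact (mw.inv_left.mul_left mv.inv_left).inv_right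
  have hpc : Commute c (a⁻¹ * v⁻¹ * u⁻¹) := by
    have vac_c : Commute (v * a * c) c := by
      rw [mul_assoc]; exact commute_right (h.v_ac.mul_left (Commute.refl _)) h.vac_a
    have := commute_left vac_c.symm (Commute.refl c)
    rw [← mul_inv_rev]
    exact this.inv_right.mul_right h.u_c.symm.inv_right
  generalize hS : w⁻¹ * v⁻¹ * (c⁻¹ * b⁻¹ * a⁻¹) = s at *
  generalize hQ : b⁻¹ * a⁻¹ * w⁻¹ * v⁻¹ = q at *
  have hsc : Commute s c := by
    have : s = (u * (v * w) * (a * b * c))⁻¹ * u := by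
      rw [eq_inv_mul_iff_mul_eq]; exact hu
    rw [this]
    exact zc.inv_left.mul_left h.u_c
  have hsq : Commute s q := by rw [hq]; exact hsc.mul_right (Commute.refl s)
  have hps : s⁻¹ * (a⁻¹ * v⁻¹ * u⁻¹) * s = q⁻¹ * (a⁻¹ * v⁻¹ * u⁻¹) * q := by
    have e := hpc.eq
    calc s⁻¹ * (a⁻¹ * v⁻¹ * u⁻¹) * s
        = s⁻¹ * c⁻¹ * (c * (a⁻¹ * v⁻¹ * u⁻¹)) * s := by group
      _ = _ := by rw [e, hq]; group
  refine ⟨hsq, hsr, hps, ?_, ?_, ?_⟩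
  · rw [hr]; exact (mv.inv_left.mul_left mu.inv_left).inv_right
  · have e : v⁻¹ * u⁻¹ * (c⁻¹ * b⁻¹ * a⁻¹) = w * (u * (v * w) * (a * b * c))⁻¹ := by
      have : Commute (u * (v * w)) (a * b * c) := mu.mul_left (mv.mul_left mw)
      rw [this.eq]; group
    have e' : a⁻¹ * v⁻¹ * u⁻¹ = a⁻¹ * (w * (u * (v * w))⁻¹) := by group
    have wp : Commute w (a⁻¹ * v⁻¹ * u⁻¹) := by
      rw [e']
      exact h.w_a.inv_right.mul_right ((Commute.refl w).mul_right dw.symm.inv_right)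
    rw [e]
    refine wp.mul_left (Commute.inv_left ?_)
    exact (za.inv_right.mul_right zv.inv_right).mul_right zu.inv_right
  · have hac : a * c = a * (q * s⁻¹) := by rw [hq]; group
    have hys : Commute (v⁻¹ * u⁻¹ * s) (a * (q * s⁻¹)) := by
      have e : v⁻¹ * u⁻¹ * s = (u * (v * w) * (a * b * c))⁻¹ * v⁻¹ := by
        have hzs : s = (u * (v * w) * (a * b * c))⁻¹ * u := by
          rw [eq_inv_mul_iff_mul_eq]; exact hu
        have : Commute (v⁻¹ * u⁻¹) (u * (v * w) * (a * b * c))⁻¹ :=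
          ((zv.inv_right.mul_right zu.inv_right).inv_left).symm
        rw [hzs, ← mul_assoc, this.eq]; group
      rw [e, ← hac]
      exact ((za.mul_right zc).inv_left).mul_left h.v_ac.inv_left
    have ha : a = v⁻¹ * u⁻¹ * (a⁻¹ * v⁻¹ * u⁻¹)⁻¹ := by group
    have e1 := hys.eq
    generalize v⁻¹ * u⁻¹ = y at *
    generalize hP : a⁻¹ * v⁻¹ * u⁻¹ = p at *
    rw [ha] at e1
    have e2 : s⁻¹ * q⁻¹ = q⁻¹ * s⁻¹ := (hsq.inv_left.inv_right).eq
    calc (s * s)⁻¹ * y * (s * s)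
        = (s⁻¹ * q⁻¹) * p * y⁻¹ * (y * p⁻¹ * (q * s⁻¹) * (y * s)) * s := by group
      _ = q⁻¹ * (s⁻¹ * p * s) * y * p⁻¹ * q := by rw [← e1, e2]; group
      _ = _ := by rw [hps]

end IsPure
end Group

/-! ### The homomorphism from the abstract group to `P_4` -/

/-- The assignment of elements to the generators `x_{31}`, `x_{22}`, `x_{13}`, `y_m`. -/
def kgen {G : Type*} (r q p : G) (y : ℤ → G) : KGen → G
  | .x31 => r
  | .x22 => q
  | .x13 => p
  | .y m => y m

/-- To define a homomorphism on the presented group it suffices to check `(1)`–`(3)`. -/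
lemma lift_rels {G : Type*} [Group G] {r q p : G} {y : ℤ → G}
    (h1 : ∀ m, (y m)⁻¹ * r * y m = r)
    (h2 : ∀ m, (y m)⁻¹ * cj p (q ^ m) * y m = cj p (q ^ m * r⁻¹))
    (h3 : ∀ m, y (m + 2) = q⁻¹ * cj p (q ^ (m + 1)) * y m * (cj p (q ^ m))⁻¹ * q) :
    ∀ x ∈ KGen.rels, FreeGroup.lift (kgen r q p y) x = 1 := by
  rintro x ⟨m, rfl | rfl | rfl⟩ <;> rw [map_mul, map_inv, mul_inv_eq_one] <;>
    simp only [cj, map_mul, map_inv, map_zpow, FreeGroup.lift_apply_of, kgen]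
  · exact h1 m
  · exact h2 m
  · exact h3 m

/-- The relations `(1)`–`(3)` for every `m` are the conjugates by `s ^ m` of those for `m = 0`,
because `s ^ m` and `q ^ m` act on `p` in the same way. -/
lemma IsKer.lift_rels {G : Type*} [Group G] {p q r y s : G} (h : IsKer p q r y s) :
    ∀ x ∈ KGen.rels, FreeGroup.lift (kgen r q p fun m => s ^ (-m) * y * s ^ m) x = 1 := by
  have hp (m : ℤ) : cj p (q ^ m) = s ^ (-m) * p * s ^ m := by
    have e := (h.qs_p.zpow_left m).eq
    rw [h.s_q.symm.inv_right.mul_zpow] at e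
    have e' : q ^ m * (s⁻¹) ^ m = (s⁻¹) ^ m * q ^ m :=
      (((h.s_q.symm.inv_right).zpow_left m).zpow_right m).eq
    calc cj p (q ^ m) = (q ^ m)⁻¹ * (p * (q ^ m * (s⁻¹) ^ m)) * s ^ m := by unfold cj; group
      _ = _ := by rw [← e]; group
  have hr (m : ℤ) : Commute (s ^ m) r := h.s_r.zpow_left m
  refine Paper.lift_rels (fun m => ?_) (fun m => ?_) (fun m => ?_)
  · have e : Commute (s ^ (-m) * y * s ^ m) r :=
      ((hr _).mul_left h.y_r).mul_left (hr _)
    rw [mul_assoc, ← e.eq]; group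
  · have e : y⁻¹ * p * y = r * p * r⁻¹ := by
      have := h.yr_p.eq
      calc y⁻¹ * p * y = y⁻¹ * (p * (y * r)) * r⁻¹ := by group
        _ = _ := by rw [← this]; group
    have e2 : cj p (q ^ m * r⁻¹) = r * cj p (q ^ m) * r⁻¹ := by unfold cj; group
    rw [e2, hp]
    calc (s ^ (-m) * y * s ^ m)⁻¹ * (s ^ (-m) * p * s ^ m) * (s ^ (-m) * y * s ^ m)
        = s ^ (-m) * (y⁻¹ * p * y) * s ^ m := by group
      _ = (s ^ (-m) * r) * p * (s ^ (-m) * r)⁻¹ := by rw [e]; group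
      _ = _ := by rw [(hr _).eq]; group
  · have hq : s ^ (-m) * q * s ^ m = q := by
      rw [(h.s_q.zpow_left _).eq]; group
    have h1 : s ^ (-m) * (q⁻¹ * p * q) * s ^ m = cj p (q ^ (m + 1)) := by
      rw [hp, ← h.p_s]; group
    calc s ^ (-(m + 2)) * y * s ^ (m + 2)
        = s ^ (-m) * ((s * s)⁻¹ * y * (s * s)) * s ^ m := by group
      _ = (s ^ (-m) * q * s ^ m)⁻¹ * (s ^ (-m) * (q⁻¹ * p * q) * s ^ m) *
            (s ^ (-m) * y * s ^ m) * (s ^ (-m) * p * s ^ m)⁻¹ * (s ^ (-m) * q * s ^ m) := by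
          rw [h.y_two]; group
      _ = _ := by rw [hq, h1, hp m]

lemma isKer_P4 : IsKer c13 c22 c31 c12 (c21 * c31) := isPure_pA.isKer

lemma c21_c31 : Commute c21 c31 := by
  obtain ⟨-, hv, hw⟩ := isPure_pA.abc_comm
  have : c31 = (pA 1 4 * pA 2 4 * pA 3 4)⁻¹ := by unfold c31; group
  rw [this]
  exact (hw.inv_left.mul_left hv.inv_left).inv_right

/-- The element `c_{21}` may be replaced by `c_{21} c_{31}` in the definition of `d_m`, since
`c_{31}` commutes with `c_{21}` and `c_{12}`. -/
lemma d_eq (m : ℤ) : d m = (c21 * c31) ^ (-m) * c12 * (c21 * c31) ^ m := by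
  have e : Commute (c31 ^ m) c12 := (isKer_P4.y_r.zpow_right m).symm
  have e2 : c21 ^ (-m) * c31 ^ (-m) = c31 ^ (-m) * c21 ^ (-m) :=
    ((c21_c31.zpow_left _).zpow_right _).eq
  rw [c21_c31.mul_zpow, c21_c31.mul_zpow, e2, d]
  have e3 : c21 ^ m * c31 ^ m = c31 ^ m * c21 ^ m := ((c21_c31.zpow_left _).zpow_right _).eq
  have e4 : c31 ^ m * c21 ^ (-m) = c21 ^ (-m) * c31 ^ m :=
    ((c21_c31.symm.zpow_left _).zpow_right _).eq
  calc c21 ^ (-m) * c12 * c21 ^ m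
      = c31 ^ (-m) * (c31 ^ m * c21 ^ (-m)) * c12 * c21 ^ m := by group
    _ = c31 ^ (-m) * c21 ^ (-m) * (c31 ^ m * c12) * c21 ^ m := by rw [e4]; group
    _ = c31 ^ (-m) * c21 ^ (-m) * c12 * (c31 ^ m * c21 ^ m) := by rw [e.eq]; group
    _ = _ := by rw [e3]

/-- The natural map from the presented group to `P_4`. -/
def toP4 : PresentedGroup KGen.rels →* P4 := PresentedGroup.toGroup isKer_P4.lift_rels

lemma toP4_of (x : KGen) : toP4 (PresentedGroup.of x) = kgen c31 c22 c13 d x := by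
  rw [toP4, PresentedGroup.toGroup.of]
  cases x <;> simp only [kgen]
  exact (d_eq _).symm

/-! ### The shift action and injectivity -/

/-- The group presented by `x_{31}`, `x_{22}`, `x_{13}`, `y_m` and relations `(1)`–`(3)`. -/
abbrev KP := PresentedGroup KGen.rels

namespace KP
open PresentedGroup

/-- The class of `x_{31}`. -/
def R : KP := of .x31
/-- The class of `x_{22}`. -/
def Q : KP := of .x22
/-- The class of `x_{13}`. -/
def P : KP := of .x13
/-- The class of `y_m`. -/
def Y (m : ℤ) : KP := of (.y m)

lemma rel1 (m : ℤ) : (Y m)⁻¹ * R * Y m = R :=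
  mul_inv_eq_one.1 (one_of_mem ⟨m, Or.inl rfl⟩)

lemma rel2 (m : ℤ) : (Y m)⁻¹ * cj P (Q ^ m) * Y m = cj P (Q ^ m * R⁻¹) :=
  mul_inv_eq_one.1 (one_of_mem ⟨m, Or.inr (Or.inl rfl)⟩)

lemma rel3 (m : ℤ) :
    Y (m + 2) = Q⁻¹ * cj P (Q ^ (m + 1)) * Y m * (cj P (Q ^ m))⁻¹ * Q :=
  mul_inv_eq_one.1 (one_of_mem ⟨m, Or.inr (Or.inr rfl)⟩)

lemma cj_cj {G : Type*} [Group G] (a b c : G) : cj (cj a b) c = cj a (b * c) := by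
  unfold cj; group

/-- The endomorphism of the presented group fixing `x_{31}` and `x_{22}`, conjugating `x_{13}` by
`x_{22} ^ k` and sending `y_m` to `y_{m+k}`. -/
def shift (k : ℤ) : KP →* KP :=
  toGroup (f := kgen R Q (cj P (Q ^ k)) fun m => Y (m + k)) <| lift_rels
    (fun m => rel1 (m + k))
    (fun m => by
      have := rel2 (m + k)
      rwa [cj_cj, cj_cj, ← mul_assoc, ← zpow_add, add_comm k])
    (fun m => by
      have := rel3 (m + k)
      rw [cj_cj, cj_cj, ← zpow_add, ← zpow_add, add_comm k, add_comm k, add_right_comm m 1 k,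
        add_right_comm m 2 k]
      exact this)

lemma shift_R (k : ℤ) : shift k R = R := toGroup.of _
lemma shift_Q (k : ℤ) : shift k Q = Q := toGroup.of _
lemma shift_P (k : ℤ) : shift k P = cj P (Q ^ k) := toGroup.of _
lemma shift_Y (k m : ℤ) : shift k (Y m) = Y (m + k) := toGroup.of _

lemma hom_ext {G : Type*} [Group G] {f g : KP →* G} (hR : f R = g R) (hQ : f Q = g Q)
    (hP : f P = g P) (hY : ∀ m, f (Y m) = g (Y m)) : f = g :=
  PresentedGroup.ext fun x => match x with
    | .x31 => hR
    | .x22 => hQ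
    | .x13 => hP
    | .y m => hY m

lemma map_cj {G H : Type*} [Group G] [Group H] (f : G →* H) (a b : G) :
    f (cj a b) = cj (f a) (f b) := by simp [cj]

lemma shift_add (k l : ℤ) : shift (k + l) = (shift k).comp (shift l) := by
  refine hom_ext ?_ ?_ ?_ fun m => ?_
  · simp [shift_R]
  · simp [shift_Q]
  · simp [shift_P, shift_Q, map_cj, cj_cj, zpow_add]
  · rw [MonoidHom.comp_apply, shift_Y, shift_Y, shift_Y, add_assoc, add_comm l]

lemma shift_zero : shift 0 = MonoidHom.id KP := by
  refine hom_ext ?_ ?_ ?_ fun m => ?_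
  · simp [shift_R]
  · simp [shift_Q]
  · simp [shift_P, cj]
  · simp [shift_Y]

lemma shift_shift (k l : ℤ) (x : KP) : shift k (shift l x) = shift (k + l) x := by
  rw [shift_add]; rfl

/-- The action of `ℤ` on the presented group by shifts. -/
def act : Multiplicative ℤ →* MulAut KP where
  toFun k :=
    { toFun := shift k.toAdd
      invFun := shift (-k.toAdd)
      left_inv := fun x => by simp [shift_shift, shift_zero]
      right_inv := fun x => by simp [shift_shift, shift_zero]
      map_mul' := map_mul _ }
  map_one' := by
    ext x
    show shift 0 x = x
    rw [shift_zero]; rfl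
  map_mul' k l := by
    ext x
    show shift (k.toAdd + l.toAdd) x = shift k.toAdd (shift l.toAdd x)
    rw [shift_shift]

/-- The element of the semidirect product whose conjugation action is the shift. -/
def S : KP ⋊[act] Multiplicative ℤ := SemidirectProduct.inr (Multiplicative.ofAdd (-1))

lemma conj_S (k : ℤ) (x : KP) :
    S ^ (-k) * SemidirectProduct.inl x * S ^ k = SemidirectProduct.inl (shift k x) := by
  have h : S ^ (-k) = SemidirectProduct.inr (Multiplicative.ofAdd k) := by
    rw [S, ← map_zpow, ← ofAdd_zsmul]; simp
  have h2 : S ^ k = (S ^ (-k))⁻¹ := by group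
  rw [h2, h]
  exact (SemidirectProduct.inl_aut (φ := act) (Multiplicative.ofAdd k) x).symm

lemma comm_S {x : KP} (h : shift 1 x = x) : Commute S (SemidirectProduct.inl x) := by
  have := conj_S 1 x
  rw [h] at this
  show _ = _
  conv_lhs => rw [← this]
  group

/-- The five-generator relations hold in the semidirect product. -/
lemma isKer : IsKer (SemidirectProduct.inl P) (SemidirectProduct.inl Q)
    (SemidirectProduct.inl R) (SemidirectProduct.inl (Y 0)) S := by
  have yr : (Y 0)⁻¹ * R * Y 0 = R := rel1 0
  have hyr : Commute (Y 0) R := by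
    show _ = _
    conv_lhs => rw [← yr]
    group
  refine ⟨comm_S (shift_Q 1), comm_S (shift_R 1), ?_, hyr.map SemidirectProduct.inl, ?_, ?_⟩
  · have := conj_S 1 P
    simpa only [shift_P, cj, zpow_neg, zpow_one, map_mul, map_inv] using this
  · rw [← map_mul]
    refine Commute.map ?_ SemidirectProduct.inl
    have h2 := rel2 0
    rw [zpow_zero, one_mul] at h2
    simp only [cj, inv_one, one_mul, mul_one, inv_inv] at h2
    show Y 0 * R * P = P * (Y 0 * R)
    calc Y 0 * R * P = Y 0 * (R * P * R⁻¹) * R := by group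
      _ = _ := by rw [← h2]; group
  · have h := conj_S 2 (Y 0)
    rw [shift_Y, rel3 0] at h
    simpa [cj, zpow_ofNat, pow_two, mul_assoc, zpow_neg] using h

end KP

/-- The homomorphism from `P_4` to the semidirect product of the presented group with `ℤ` given by
the words of `IsKer.isPure`. It kills the full twist, and composed with `toP4` it is the inclusion
of the presented group. -/
def fromP4 : P4 →* KP ⋊[KP.act] Multiplicative ℤ :=
  PresentedGroup.toGroup (lift_P4Rels KP.isKer.isPure)

lemma toP4_injective : Function.Injective toP4 := by
  have e12 : fromP4 (pA 1 2) = _ := PresentedGroup.toGroup.of (lift_P4Rels KP.isKer.isPure)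
  have e13 : fromP4 (pA 1 3) = _ := PresentedGroup.toGroup.of (lift_P4Rels KP.isKer.isPure)
  have e23 : fromP4 (pA 2 3) = _ := PresentedGroup.toGroup.of (lift_P4Rels KP.isKer.isPure)
  have e14 : fromP4 (pA 1 4) = _ := PresentedGroup.toGroup.of (lift_P4Rels KP.isKer.isPure)
  have e24 : fromP4 (pA 2 4) = _ := PresentedGroup.toGroup.of (lift_P4Rels KP.isKer.isPure)
  have e34 : fromP4 (pA 3 4) = _ := PresentedGroup.toGroup.of (lift_P4Rels KP.isKer.isPure)
  simp only [pgen] at e12 e13 e23 e14 e24 e34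
  have h31 : fromP4 c31 = SemidirectProduct.inl KP.R := by
    simp only [c31, map_mul, map_inv, e34, e24, e14]
    have : KP.S * (SemidirectProduct.inl KP.R) * KP.S⁻¹ = SemidirectProduct.inl KP.R := by
      rw [KP.isKer.s_r.eq]; group
    conv_rhs => rw [← this]
    group
  have h21 : fromP4 c21 = KP.S * (SemidirectProduct.inl KP.R)⁻¹ := by
    simp only [c21, map_mul, map_inv, e23, e13]
    rw [KP.isKer.s_r.inv_right.eq]; group
  have h22 : fromP4 c22 = SemidirectProduct.inl KP.Q := by
    have : c22 = (pA 2 4)⁻¹ * (pA 1 4)⁻¹ * c21 := by unfold c22 c21; group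
    simp only [this, map_mul, map_inv, e24, e14, h21]
    group
  have h12 : fromP4 c12 = SemidirectProduct.inl (KP.Y 0) := by
    simp only [c12, map_mul, map_inv, e13, e12]; group
  have h13 : fromP4 c13 = SemidirectProduct.inl KP.P := by
    have : c13 = (pA 1 4)⁻¹ * c12 := by unfold c13 c12; group
    simp only [this, map_mul, map_inv, e14, h12]; group
  have hd (m : ℤ) : fromP4 (d m) = SemidirectProduct.inl (KP.Y m) := by
    have hs : fromP4 (c21 * c31) = KP.S := by rw [map_mul, h21, h31]; group
    rw [d_eq, map_mul, map_mul, map_zpow, map_zpow, hs, h12, KP.conj_S, KP.shift_Y, zero_add]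
  have key : fromP4.comp toP4 = SemidirectProduct.inl := by
    refine KP.hom_ext ?_ ?_ ?_ fun m => ?_ <;> rw [MonoidHom.comp_apply]
    · exact (congrArg fromP4 (toP4_of .x31)).trans h31
    · exact (congrArg fromP4 (toP4_of .x22)).trans h22
    · exact (congrArg fromP4 (toP4_of .x13)).trans h13
    · exact (congrArg fromP4 (toP4_of (.y m))).trans (hd m)
  intro x y hxy
  apply SemidirectProduct.inl_injective (φ := KP.act)
  rw [← key, MonoidHom.comp_apply, MonoidHom.comp_apply, hxy]

/-! ### The kernel of `φ` -/

/-- The subgroup generated by `c_{31}`, `c_{22}`, `c_{13}` and the `d_m`. -/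
def gens : Subgroup P4 := Subgroup.closure ({c31, c22, c13} ∪ Set.range d)

lemma c31_mem : c31 ∈ gens := Subgroup.subset_closure (by simp)
lemma c22_mem : c22 ∈ gens := Subgroup.subset_closure (by simp)
lemma c13_mem : c13 ∈ gens := Subgroup.subset_closure (by simp)
lemma d_mem (m : ℤ) : d m ∈ gens := Subgroup.subset_closure (by simp)
lemma c12_mem : c12 ∈ gens := by simpa [d] using d_mem 0

lemma range_toP4 : toP4.range = gens := by
  rw [MonoidHom.range_eq_map, ← PresentedGroup.closure_range_of, MonoidHom.map_closure, gens]
  congr 1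
  ext x
  simp only [Set.mem_image, Set.mem_range, Set.mem_union, Set.mem_insert_iff,
    Set.mem_singleton_iff]
  constructor
  · rintro ⟨_, ⟨k, rfl⟩, rfl⟩
    rw [toP4_of]
    cases k <;> simp [kgen]
  · rintro ((rfl | rfl | rfl) | ⟨m, rfl⟩)
    · exact ⟨_, ⟨.x31, rfl⟩, toP4_of _⟩
    · exact ⟨_, ⟨.x22, rfl⟩, toP4_of _⟩
    · exact ⟨_, ⟨.x13, rfl⟩, toP4_of _⟩
    · exact ⟨_, ⟨.y m, rfl⟩, toP4_of _⟩

/-- `P_4` is generated by the six elements `c_{ij}`. -/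
lemma eq_top_of_c {H : Subgroup P4} (h11 : c11 ∈ H) (h21 : c21 ∈ H) (h12 : c12 ∈ H)
    (h31 : c31 ∈ H) (h22 : c22 ∈ H) (h13 : c13 ∈ H) : H = ⊤ := by
  have a12 : pA 1 2 ∈ H := by simpa [c11] using h11
  have a13 : pA 1 3 ∈ H := by
    have := H.mul_mem h12 a12
    simpa [c12] using this
  have a23 : pA 2 3 ∈ H := by
    have := H.mul_mem h21 a13
    simpa [c21] using this
  have a14 : pA 1 4 ∈ H := by
    have : c13 = (pA 1 4)⁻¹ * c12 := by unfold c13 c12; group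
    rw [this] at h13
    simpa using (H.mul_mem_cancel_right h12).1 h13
  have a24 : pA 2 4 ∈ H := by
    have : c22 = (pA 2 4)⁻¹ * (pA 1 4)⁻¹ * c21 := by unfold c22 c21; group
    rw [this] at h22
    have := (H.mul_mem_cancel_right h21).1 h22
    simpa using (H.mul_mem_cancel_right (H.inv_mem a14)).1 this
  have a34 : pA 3 4 ∈ H := by
    have := (H.mul_mem_cancel_right (H.inv_mem a14)).1 h31
    simpa using (H.mul_mem_cancel_right (H.inv_mem a24)).1 this
  rw [eq_top_iff]
  intro x _
  refine PresentedGroup.generated_by P4Rels H ?_ x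
  rintro ⟨⟨i, j⟩, h⟩
  have ⟨hi, hij, hj⟩ : 1 ≤ i ∧ i < j ∧ j ≤ 4 := h
  have e : (PresentedGroup.of ⟨(i, j), h⟩ : P4) = pA i j := by simp [pA, hi, hij, hj]
  rw [e]
  have : i ≤ 3 := by omega
  interval_cases i <;> interval_cases j <;> assumption

/-- An element that conjugates a generating set into the generated subgroup, in both directions,
normalizes that subgroup. -/
lemma mem_normalizer_of {G : Type*} [Group G] {S : Set G} {g : G}
    (h1 : ∀ x ∈ S, g * x * g⁻¹ ∈ Subgroup.closure S)
    (h2 : ∀ x ∈ S, g⁻¹ * x * g ∈ Subgroup.closure S) :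
    g ∈ Subgroup.normalizer (Subgroup.closure S : Set G) := by
  have k1 : Subgroup.closure S ≤ (Subgroup.closure S).comap (MulAut.conj g).toMonoidHom :=
    (Subgroup.closure_le _).2 h1
  have k2 : Subgroup.closure S ≤ (Subgroup.closure S).comap (MulAut.conj g⁻¹).toMonoidHom :=
    (Subgroup.closure_le _).2 fun x hx => by simpa using h2 x hx
  rw [Subgroup.mem_normalizer_iff]
  refine fun x => ⟨fun hx => k1 hx, fun hx => ?_⟩
  have := k2 hx
  simpa [mul_assoc] using this

/-- `gens` is normal: it is normalized by itself, by `c_{21} c_{31}`, which permutes the `d_m`, and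
by the central full twist, and these generate `P_4`. -/
instance gens_normal : gens.Normal := by
  rw [← Subgroup.normalizer_eq_top_iff]
  have hs : c21 * c31 ∈ Subgroup.normalizer (gens : Set P4) := by
    have hd (m k : ℤ) : (c21 * c31) ^ (-k) * d m * (c21 * c31) ^ k = d (m + k) := by
      rw [d_eq, d_eq]; group
    have hK := isKer_P4
    apply mem_normalizer_of
    · rintro x ((rfl | rfl | rfl) | ⟨m, rfl⟩)
      · rw [hK.s_r.eq, mul_inv_cancel_right]; exact c31_mem
      · rw [hK.s_q.eq, mul_inv_cancel_right]; exact c22_mem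
      · have e : c21 * c31 * c13 * (c21 * c31)⁻¹ = c22 * c13 * c22⁻¹ := by
          generalize c21 * c31 = s at *
          have h3 : c22⁻¹ * s * c13 = c13 * (c22⁻¹ * s) := by
            have h4 := hK.qs_p.inv_left.eq
            have h5 : (c22 * s⁻¹)⁻¹ = c22⁻¹ * s := by
              rw [mul_inv_rev, inv_inv, hK.s_q.inv_right.eq]
            rwa [h5] at h4
          calc s * c13 * s⁻¹ = c22 * (c22⁻¹ * s * c13) * s⁻¹ := by group
            _ = _ := by rw [h3]; group
        rw [e]
        exact gens.mul_mem (gens.mul_mem c22_mem c13_mem) (gens.inv_mem c22_mem)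
      · have := hd m (-1)
        rw [neg_neg, zpow_one, zpow_neg_one] at this
        rw [this]; exact d_mem _
    · rintro x ((rfl | rfl | rfl) | ⟨m, rfl⟩)
      · rw [mul_assoc, ← hK.s_r.eq, inv_mul_cancel_left]; exact c31_mem
      · rw [mul_assoc, ← hK.s_q.eq, inv_mul_cancel_left]; exact c22_mem
      · rw [hK.p_s]
        exact gens.mul_mem (gens.mul_mem (gens.inv_mem c22_mem) c13_mem) c22_mem
      · have := hd m 1
        rw [zpow_one, zpow_neg_one] at this
        rw [this]; exact d_mem _
  have hle : gens ≤ Subgroup.normalizer (gens : Set P4) := Subgroup.le_normalizer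
  have hz : pA 1 2 * (pA 1 3 * pA 2 3) * (pA 1 4 * pA 2 4 * pA 3 4) ∈
      Subgroup.normalizer (gens : Set P4) := by
    have hc : pA 1 2 * (pA 1 3 * pA 2 3) * (pA 1 4 * pA 2 4 * pA 3 4) ∈ Subgroup.center P4 := by
      obtain ⟨zu, zv, zw, za, zb, zc⟩ := isPure_pA.central
      generalize pA 1 2 * (pA 1 3 * pA 2 3) * (pA 1 4 * pA 2 4 * pA 3 4) = z at *
      rw [← Subgroup.centralizer_univ, Subgroup.mem_centralizer_iff]
      have : Subgroup.centralizer {z} = ⊤ := by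
        have hm {x : P4} (h : Commute z x) : x ∈ Subgroup.centralizer {z} :=
          Subgroup.mem_centralizer_singleton_iff.2 h.symm
        have iu := zu.inv_right
        have iv := zv.inv_right
        have ia := za.inv_right
        have iw := zw.inv_right
        have ib := zb.inv_right
        have ic := zc.inv_right
        exact eq_top_of_c (hm iu) (hm (iw.mul_right iv)) (hm (iv.mul_right iu))
          (hm ((ic.mul_right ib).mul_right ia))
          (hm (((ib.mul_right ia).mul_right iw).mul_right iv))
          (hm ((ia.mul_right iv).mul_right iu))
      intro x _
      exact Subgroup.mem_centralizer_singleton_iff.1 (this ▸ Subgroup.mem_top x)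
    rw [Subgroup.mem_normalizer_iff]
    intro x
    rw [← Subgroup.mem_center_iff.1 hc x, mul_inv_cancel_right]
  have h31 := hle c31_mem
  have h21 := (Subgroup.mul_mem_cancel_right _ h31).1 hs
  refine eq_top_of_c ?_ h21 (hle c12_mem) h31 (hle c22_mem) (hle c13_mem)
  -- Modulo the full twist `z`, the element `c_{11}` is the inverse of `c_{21} c_{31}`.
  have e : pA 1 2 * (pA 1 3 * pA 2 3) * (pA 1 4 * pA 2 4 * pA 3 4) = c11⁻¹ * c21⁻¹ * c31⁻¹ := by
    unfold c11 c21 c31; group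
  rw [e] at hz
  have := (Subgroup.mul_mem_cancel_right _ (Subgroup.inv_mem _ h31)).1 hz
  simpa using (Subgroup.mul_mem_cancel_right _ (Subgroup.inv_mem _ h21)).1 this

lemma c11_c21 : Commute c11 c21 := by
  have h := isPure_pA.u_vw
  have : c21 = (pA 1 3 * pA 2 3)⁻¹ := by unfold c21; group
  rw [this]
  exact h.inv_left.inv_right

/-- The map `(i, j) ↦ c_{11}^i c_{21}^j` to the quotient of `P_4` by `gens`. -/
def cosetMap : Multiplicative (ℤ × ℤ) →* P4 ⧸ gens :=
  (QuotientGroup.mk' gens).comp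
    { toFun := fun x => c11 ^ x.toAdd.1 * c21 ^ x.toAdd.2
      map_one' := by simp
      map_mul' := fun x y => by
        have : c21 ^ x.toAdd.2 * c11 ^ y.toAdd.1 = c11 ^ y.toAdd.1 * c21 ^ x.toAdd.2 :=
          ((c11_c21.symm.zpow_left _).zpow_right _).eq
        rw [toAdd_mul, Prod.fst_add, Prod.snd_add, zpow_add, zpow_add, mul_assoc, mul_assoc,
          ← mul_assoc (c21 ^ x.toAdd.2), this]
        group }

/-- Since `P_4` is generated by `c_{11}`, `c_{21}` and elements of `gens`, the quotient map by `gens`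
factors through `φ`, so the kernel of `φ` is contained in `gens`. -/
lemma gens_eq_ker (φ : P4 →* Multiplicative (ℤ × ℤ))
    (h11 : φ c11 = Multiplicative.ofAdd (1, 0)) (h21 : φ c21 = Multiplicative.ofAdd (0, 1))
    (h12 : φ c12 = 1) (h31 : φ c31 = 1) (h22 : φ c22 = 1) (h13 : φ c13 = 1) :
    gens = φ.ker := by
  apply le_antisymm
  · rw [gens, Subgroup.closure_le]
    rintro x ((rfl | rfl | rfl) | ⟨m, rfl⟩)
    · exact h31
    · exact h22
    · exact h13
    · show φ (d m) = 1
      rw [d, map_mul, map_mul, h12, map_zpow, map_zpow]; group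
  · have key : cosetMap.comp φ = QuotientGroup.mk' gens := by
      have hK {x : P4} (hx : φ x = 1) (hx' : x ∈ gens) :
          x ∈ (cosetMap.comp φ).eqLocus (QuotientGroup.mk' gens) := by
        show cosetMap (φ x) = QuotientGroup.mk' gens x
        rw [hx, map_one]
        exact ((QuotientGroup.eq_one_iff x).2 hx').symm
      have : (cosetMap.comp φ).eqLocus (QuotientGroup.mk' gens) = ⊤ := by
        refine eq_top_of_c ?_ ?_ (hK h12 c12_mem) (hK h31 c31_mem) (hK h22 c22_mem)
          (hK h13 c13_mem)
        · show cosetMap (φ c11) = QuotientGroup.mk' gens c11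
          rw [h11]; simp [cosetMap]
        · show cosetMap (φ c21) = QuotientGroup.mk' gens c21
          rw [h21]; simp [cosetMap]
      exact MonoidHom.ext fun x => (this ▸ Subgroup.mem_top x :
        x ∈ (cosetMap.comp φ).eqLocus (QuotientGroup.mk' gens))
    intro x hx
    rw [← QuotientGroup.eq_one_iff]
    have := DFunLike.congr_fun key x
    rw [MonoidHom.comp_apply, MonoidHom.mem_ker.1 hx, map_one] at this
    exact this.symm

/-- Lemma 4.2: for the homomorphism `φ : P_4 → ℤ²` of the paper, `K = Ker(φ)` is generated
by `c_{31}, c_{22}, c_{13}` and the `d_m` (`m ∈ ℤ`), and the obvious map from the group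
presented by the generators `x_{31}, x_{22}, x_{13}, y_m` and the relations (1)–(3)
onto `K` is an isomorphism. -/
theorem statement5 (φ : P4 →* Multiplicative (ℤ × ℤ))
    (hφ : φ c11 = Multiplicative.ofAdd (1, 0) ∧ φ c21 = Multiplicative.ofAdd (0, 1) ∧
          φ c12 = 1 ∧ φ c31 = 1 ∧ φ c22 = 1 ∧ φ c13 = 1) :
    Subgroup.closure ({c31, c22, c13} ∪ Set.range d) = φ.ker ∧
    ∃ f : PresentedGroup KGen.rels →* P4,
      f (PresentedGroup.of KGen.x31) = c31 ∧
      f (PresentedGroup.of KGen.x22) = c22 ∧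
      f (PresentedGroup.of KGen.x13) = c13 ∧
      (∀ m : ℤ, f (PresentedGroup.of (KGen.y m)) = d m) ∧
      Function.Injective f ∧
      f.range = φ.ker := by
  obtain ⟨h11, h21, h12, h31, h22, h13⟩ := hφ
  have hker := gens_eq_ker φ h11 h21 h12 h31 h22 h13
  exact ⟨hker, toP4, toP4_of _, toP4_of _, toP4_of _, fun m => toP4_of _, toP4_injective,
    range_toP4.trans hker⟩

end Paper
end

section
/- In the group G presented by generators x_{31}, x_{22}, x_{13}, y_m (m ∈ ℤ) and the relations (3) y_{m+2} = x_{22}^{−1} · x_{13}^{x_{22}^{m+1}} · y_m · (x_{13}^{x_{22}^{m}})^{−1} · x_{22} (m ∈ ℤ), the normal closure of the set of elements { y_m^{−1} · x_{13}^{x_{22}^m} · y_m · (x_{13}^{x_{22}^m x_{31}^{−1}})^{−1} : m = 2m_1+1 odd } equals the normal closure of the set { (x_{13}^{(x_{22} x_{13})^{m_1−1} x_{22}^{2}})^{y_1} · ( x_{13}^{x_{22}^{m} x_{31}^{−1} x_{22}^{−(m−1)} (x_{13} x_{22})^{m_1}} )^{−1} : m_1 ∈ ℤ, m = 2m_1+1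 }; that is, modulo relations (3), the relations (2) at odd indices m = 2m_1+1 are equivalent to the relations (x_{13}^{(x_{22} x_{13})^{m_1−1} x_{22}^{2}})^{y_1} = x_{13}^{x_{22}^{m} x_{31}^{−1} x_{22}^{−(m−1)} (x_{13} x_{22})^{m_1}}. -/
/-!
Write `a = x₂₂`, `b = x₁₃`. Iterating the relations (3) from `y₁`, in both directions, gives the
closed form `y_{2k+1} = a^{-(2k+1)} (ba)^k a y₁ (ba)^{-k} a^{2k}` (`Y_odd`). Hence
`y_m⁻¹ b^{a^m} y_m` is the conjugate of `b` by `(ba)^k a y₁ (ba)^{-k} a^{2k}`, and since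
`(ba)^k a = b (ab)^{k-1} a²` the leading `b` may be dropped. Therefore the `k`-th element of the
second family is the conjugate of the `k`-th element of the first by `a^{-2k} (ba)^k`, and two
families that are conjugate term by term have the same normal closure.
-/

namespace Paper

/-- Abstract generators `x_{31}, x_{22}, x_{13}` and `y_m` (`m ∈ ℤ`). -/
inductive GGen
  | x31 | x22 | x13 | y (m : ℤ)

namespace GGen
open FreeGroup
/-- The relations (3): `y_{m+2} = x_{22}⁻¹ x_{13}^{x_{22}^{m+1}} y_m (x_{13}^{x_{22}^m})⁻¹ x_{22}`,
for all `m ∈ ℤ`. -/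
def rels3 : Set (FreeGroup GGen) :=
  {r | ∃ m : ℤ,
    r = of (y (m + 2)) *
        ((of x22)⁻¹ * cj (of x13) (of x22 ^ (m + 1)) * of (y m) *
         (cj (of x13) (of x22 ^ m))⁻¹ * of x22)⁻¹}
end GGen

/-- The group `G` presented by `x_{31}, x_{22}, x_{13}, y_m (m ∈ ℤ)` and the relations (3). -/
abbrev GG := PresentedGroup GGen.rels3

/-- `x_{31}` as an element of `G`. -/
def X31 : GG := PresentedGroup.of GGen.x31
/-- `x_{22}` as an element of `G`. -/
def X22 : GG := PresentedGroup.of GGen.x22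
/-- `x_{13}` as an element of `G`. -/
def X13 : GG := PresentedGroup.of GGen.x13
/-- `y_m` as an element of `G`. -/
def Y (m : ℤ) : GG := PresentedGroup.of (GGen.y m)


lemma Y_rec (m : ℤ) :
    Y (m + 2) = X22⁻¹ * cj X13 (X22 ^ (m + 1)) * Y m * (cj X13 (X22 ^ m))⁻¹ * X22 := by
  have h : PresentedGroup.mk GGen.rels3 _ = 1 :=
    PresentedGroup.one_of_mem (rels := GGen.rels3) ⟨m, rfl⟩
  rw [map_mul, map_inv, mul_inv_eq_one] at h
  simp only [cj, map_mul, map_inv, map_zpow] at h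
  exact h

/-- One step of the recursion (3) at an odd index, in the form that telescopes. -/
lemma Y_odd_step (k : ℤ) :
    X22 ^ (2 * (k + 1) + 1) * Y (2 * (k + 1) + 1) * X22 ^ (-(2 * (k + 1))) =
      (X13 * X22) * (X22 ^ (2 * k + 1) * Y (2 * k + 1) * X22 ^ (-(2 * k))) *
        (X13 * X22)⁻¹ := by
  rw [show 2 * (k + 1) + 1 = (2 * k + 1) + 2 by ring, Y_rec]
  simp only [cj]
  group

/-- Closed form of the odd-indexed generators in terms of `y₁`. -/
lemma Y_odd (k : ℤ) :
    X22 ^ (2 * k + 1) * Y (2 * k + 1) * X22 ^ (-(2 * k)) =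
      (X13 * X22) ^ k * (X22 * Y 1) * (X13 * X22) ^ (-k) := by
  induction k using Int.induction_on with
  | zero => simp
  | succ n ih =>
    rw [Y_odd_step, ih]
    generalize X13 * X22 = w
    group
  | pred n ih =>
    have h := Y_odd_step (-(n : ℤ) - 1)
    rw [sub_add_cancel, ih] at h
    rw [eq_mul_inv_iff_mul_eq, ← inv_mul_eq_iff_eq_mul] at h
    rw [← h]
    generalize X13 * X22 = w
    group

/-- `(ba)^k = b (ab)^{k-1} a`. -/
lemma mul_zpow_shift {G : Type*} [Group G] (a b : G) (k : ℤ) :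
    (b * a) ^ k = b * (a * b) ^ (k - 1) * a := by
  have h : SemiconjBy b (a * b) (b * a) := by simp [SemiconjBy, mul_assoc]
  rw [(h.zpow_right (k - 1)).eq, mul_assoc, ← zpow_add_one, sub_add_cancel]

/-- Families that are conjugate term by term have the same normal closure. -/
lemma normalClosure_eq_of_conj {G ι : Type*} [Group G] (s t c : ι → G)
    (h : ∀ i, t i = (c i)⁻¹ * s i * c i) :
    Subgroup.normalClosure {g | ∃ i, g = s i} = Subgroup.normalClosure {g | ∃ i, g = t i} := by
  apply le_antisymm <;> refine Subgroup.normalClosure_le_normal ?_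
  · rintro _ ⟨i, rfl⟩
    have hs : s i = c i * t i * (c i)⁻¹ := by rw [h]; group
    rw [hs]
    exact Subgroup.normalClosure_normal.conj_mem (t i)
      (Subgroup.subset_normalClosure (show t i ∈ {g | ∃ i, g = t i} from ⟨i, rfl⟩)) _
  · rintro _ ⟨i, rfl⟩
    rw [h]
    exact Subgroup.normalClosure_normal.conj_mem' (s i)
      (Subgroup.subset_normalClosure (show s i ∈ {g | ∃ i, g = s i} from ⟨i, rfl⟩)) _

/-- Lemma 4.4: modulo the relations (3), the relations (2) at odd indices `m = 2m₁+1` are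
equivalent to `(x_{13}^{(x_{22}x_{13})^{m₁-1}x_{22}^2})^{y_1}
 = x_{13}^{x_{22}^{m} x_{31}⁻¹ x_{22}^{-(m-1)} (x_{13}x_{22})^{m₁}}`:
the two normal closures coincide. -/
theorem statement7 :
    Subgroup.normalClosure
        {g : GG | ∃ m₁ : ℤ,
          g = (Y (2 * m₁ + 1))⁻¹ * cj X13 (X22 ^ (2 * m₁ + 1)) * Y (2 * m₁ + 1) *
              (cj X13 (X22 ^ (2 * m₁ + 1) * X31⁻¹))⁻¹} =
    Subgroup.normalClosure
        {g : GG | ∃ m₁ : ℤ,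
          g = cj (cj X13 ((X22 * X13) ^ (m₁ - 1) * X22 ^ (2 : ℤ))) (Y 1) *
              (cj X13 (X22 ^ (2 * m₁ + 1) * X31⁻¹ * X22 ^ (-(2 * m₁)) *
                       (X13 * X22) ^ m₁))⁻¹} := by
  refine normalClosure_eq_of_conj _ _ (fun k => X22 ^ (-(2 * k)) * (X13 * X22) ^ k) fun k => ?_
  have hY : Y (2 * k + 1) = X22 ^ (-(2 * k + 1)) *
      ((X13 * X22) ^ k * (X22 * Y 1) * (X13 * X22) ^ (-k)) * X22 ^ (2 * k) := by
    rw [← Y_odd]; group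
  -- Every power of `ba` is written through `u = (ab)^{k-1}`, leaving a free-group identity.
  simp only [hY, cj, zpow_neg, zpow_two, mul_zpow_shift X22 X13 k]
  generalize (X22 * X13) ^ (k - 1) = u
  group

end Paper
end
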